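/- (Finite fundamental set suffices for instability; Theorems 3.2 and 3.5, torus form.) For every nonempty subset S ⊆ Ξ_{k,l}, the following are equivalent: (i) there exists a normalised weight vector λ ∈ ℚ^{m+n+2} with ⟨I,λ⟩ > 0 for all I ∈ S; (ii) there exists a fundamental solution (ρ,σ) ∈ ℚ^{m+n+2} with ⟨I,(ρ,σ)⟩ > 0 for all I ∈ S (equivalently, S is contained in the destabilised set N^+((ρ,σ)) = {I ∈ Ξ_{k,l} : ⟨I,(ρ,σ)⟩ > 0}). -/

import Mathlib

/-! A weight `λ` destabilising `S` can be moved, inside the cone of weights that induce the same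
weak inequalities as `λ`, until it spans an extremal ray.

Let `I₀ ∈ S` minimise `⟨I, λ⟩` over `S`, and let `B` be the set of `e` in `EqSet m n k l` with
`0 ≤ ⟨e, λ⟩`. It contains the chamber walls `ε_i - ε_j` (`i ≤ j`) and the differences `I - I₀`
for `I ∈ S`. So every `x` in the cone `{x | ∀ e ∈ B, 0 ≤ ⟨e, x⟩}`, taken in the
`(m + n)`-dimensional space `V` of vectors with both coordinate sums zero, has non-increasing
entries and satisfies `⟨I, x⟩ ≥ ⟨I₀, x⟩` on `S`. The walls make the cone pointed.

`exists_ray` is the general fact on polyhedral cones: a pointed cone on which `φ` takes a positive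
value has an extremal ray on which `φ` is positive, and this ray is cut out by `dim V - 1` of the
inequalities, turned into equalities. Applied to `φ = ⟨I₀, ·⟩`, and after scaling the leading entry
of one of the two blocks to `1`, it yields the fundamental solution. -/

open Finset

/-- The finite set `Eq_{m,n}^{k,l}` of integer vectors `(w,v)` with `|w_i| ≤ k`,
`∑ w_i = 0`, `|v_j| ≤ l`, `∑ v_j = 0`. -/
def EqSet (m n k l : ℕ) : Set ((Fin (m + 1) → ℤ) × (Fin (n + 1) → ℤ)) :=
  {e | (∀ i, -(k : ℤ) ≤ e.1 i ∧ e.1 i ≤ (k : ℤ)) ∧ (∑ i, e.1 i) = 0 ∧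
       (∀ j, -(l : ℤ) ≤ e.2 j ∧ e.2 j ≤ (l : ℤ)) ∧ (∑ j, e.2 j) = 0}

/-- `x` solves the linear system given by the `m + n - 1` equations `e t`, the two
sum-zero conditions, and the normalisation `x.1 0 = 1` (if `first`) or `x.2 0 = 1`. -/
def SolvesSystem (m n : ℕ)
    (e : Fin (m + n - 1) → ((Fin (m + 1) → ℤ) × (Fin (n + 1) → ℤ)))
    (first : Bool)
    (x : (Fin (m + 1) → ℚ) × (Fin (n + 1) → ℚ)) : Prop :=
  (∀ t, (∑ i, ((e t).1 i : ℚ) * x.1 i) + (∑ j, ((e t).2 j : ℚ) * x.2 j) = 0) ∧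
  (∑ i, x.1 i) = 0 ∧ (∑ j, x.2 j) = 0 ∧
  (if first then x.1 0 = 1 else x.2 0 = 1)

/-- `(ρ,σ)` is a fundamental solution: non-increasing entries, coordinate sums zero,
`ρ_0 = 1` or `σ_0 = 1`, and `(ρ,σ)` is the unique solution of a consistent linear
system of `m + n - 1` equations chosen from `Eq_{m,n}^{k,l}` together with the
sum-zero and normalisation conditions. -/
def IsFundamentalSolution (m n k l : ℕ)
    (ρ : Fin (m + 1) → ℚ) (σ : Fin (n + 1) → ℚ) : Prop :=
  (∀ i j : Fin (m + 1), i ≤ j → ρ j ≤ ρ i) ∧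
  (∀ i j : Fin (n + 1), i ≤ j → σ j ≤ σ i) ∧
  (∑ i, ρ i) = 0 ∧ (∑ j, σ j) = 0 ∧
  (ρ 0 = 1 ∨ σ 0 = 1) ∧
  ∃ (e : Fin (m + n - 1) → ((Fin (m + 1) → ℤ) × (Fin (n + 1) → ℤ))) (first : Bool),
    (∀ t, e t ∈ EqSet m n k l) ∧
    ∀ x, SolvesSystem m n e first x ↔ x = (ρ, σ)

/-! ### Extremal rays of pointed polyhedral cones -/

open Module in
/-- From a point `x` of the cone with a direction `y ≠ 0` in `ker φ` along which all active
constraints stay active, one can move to a point of the cone with the same value of `φ` and strictly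
more active constraints: go along `y` or `-y` until the first inactive constraint becomes active. -/
lemma exists_more_active {V : Type*} [AddCommGroup V] [Module ℚ V]
    (A : Finset (Dual ℚ V)) (hA : ∀ y : V, (∀ a ∈ A, a y = 0) → y = 0)
    (φ : Dual ℚ V) (x y : V) (hx : ∀ a ∈ A, 0 ≤ a x) (hy : y ≠ 0) (hφ : φ y = 0)
    (hact : ∀ a ∈ A, a x = 0 → a y = 0) :
    ∃ x' : V, (∀ a ∈ A, 0 ≤ a x') ∧ φ x' = φ x ∧
      (A.filter fun a => a x = 0) ⊂ (A.filter fun a => a x' = 0) := by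
  obtain ⟨z, hφz, hactz, b, hb, hbz⟩ : ∃ z : V, φ z = 0 ∧ (∀ a ∈ A, a x = 0 → a z = 0) ∧
      ∃ b ∈ A, b z < 0 := by
    obtain ⟨b, hb, hby⟩ : ∃ b ∈ A, b y ≠ 0 := by
      by_contra! h
      exact hy (hA y h)
    rcases lt_or_gt_of_ne hby with h | h
    · exact ⟨y, hφ, hact, b, hb, h⟩
    · exact ⟨-y, by simp [hφ], fun a ha h0 => by simp [hact a ha h0], b, hb, by simpa using h⟩
  obtain ⟨c, hc, hmin⟩ := Finset.exists_min_image (A.filter fun a => a z < 0)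
    (fun a => a x / (-(a z))) ⟨b, by simp [hb, hbz]⟩
  simp only [Finset.mem_filter] at hc hmin
  obtain ⟨hcA, hcz⟩ := hc
  set t : ℚ := c x / (-(c z)) with ht
  have ht0 : 0 ≤ t := div_nonneg (hx c hcA) (by linarith)
  have hct : c x + t * c z = 0 := by
    rw [ht]
    have := hcz.ne
    field_simp
    ring
  refine ⟨x + t • z, fun a ha => ?_, by simp [hφz], ?_⟩
  · simp only [map_add, map_smul, smul_eq_mul]
    rcases lt_or_ge (a z) 0 with h | h
    · have h1 := hmin a ⟨ha, h⟩
      rw [le_div_iff₀ (by linarith)] at h1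
      linarith
    · have := hx a ha
      positivity
  · rw [Finset.ssubset_iff_of_subset]
    · refine ⟨c, by simpa [hcA] using hct, fun h => ?_⟩
      simp only [Finset.mem_filter] at h
      exact hcz.ne (hactz c hcA h.2)
    · intro a ha
      simp only [Finset.mem_filter] at ha ⊢
      exact ⟨ha.1, by simp [ha.2, hactz a ha.1 ha.2]⟩

open Module in
/-- A pointed polyhedral cone containing a point where `φ` is positive has an extremal ray, spanned
by `x'`, on which `φ` is positive; `dim V - 1` of the constraints cut out the line of `x'`. -/
lemma exists_ray {V : Type*} [AddCommGroup V] [Module ℚ V] [FiniteDimensional ℚ V]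
    (A : Finset (Dual ℚ V)) (hA : ∀ y : V, (∀ a ∈ A, a y = 0) → y = 0)
    (φ : Dual ℚ V) (x : V) (hx : ∀ a ∈ A, 0 ≤ a x) (hφ : 0 < φ x) (N : ℕ)
    (hN : finrank ℚ V = N + 1) :
    ∃ x' : V, (∀ a ∈ A, 0 ≤ a x') ∧ 0 < φ x' ∧
      ∃ f : Fin N → Dual ℚ V, (∀ i, f i ∈ A ∧ f i x' = 0) ∧
        ∀ y, (∀ i, f i y = 0) → ∃ c : ℚ, y = c • x' := by
  classical
  obtain ⟨s, hs, hmax⟩ := Finset.exists_max_image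
    (A.powerset.filter fun s => ∃ x' : V, (∀ a ∈ A, 0 ≤ a x') ∧ 0 < φ x' ∧
      s = A.filter fun a => a x' = 0) Finset.card
    ⟨A.filter fun a => a x = 0, by
      simp only [Finset.mem_filter, Finset.mem_powerset]
      exact ⟨Finset.filter_subset _ _, x, hx, hφ, rfl⟩⟩
  simp only [Finset.mem_filter, Finset.mem_powerset] at hs hmax
  obtain ⟨-, x', hx', hφ', rfl⟩ := hs
  -- By maximality of the active set, the active constraints and `φ` have no common kernel.
  have key : ∀ y, φ y = 0 → (∀ a ∈ A, a x' = 0 → a y = 0) → y = 0 := by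
    intro y h1 h2
    by_contra h
    obtain ⟨w, hw, hwφ, hlt⟩ := exists_more_active A hA φ x' y hx' h h1 h2
    exact absurd (Finset.card_lt_card hlt) (not_lt.2
      (hmax _ ⟨Finset.filter_subset _ _, w, hw, by rwa [hwφ], rfl⟩))
  have line : ∀ y, (∀ a ∈ A, a x' = 0 → a y = 0) → y = (φ y / φ x') • x' := by
    intro y h
    refine sub_eq_zero.1 (key _ ?_ fun a ha h0 => by simp [h0, h a ha h0])
    simp [hφ'.ne']
  set s : Set (Dual ℚ V) := {a | a ∈ A ∧ a x' = 0} with hs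
  have hco : (Submodule.span ℚ s).dualCoannihilator = Submodule.span ℚ {x'} := by
    apply SetLike.coe_injective
    rw [Submodule.coe_dualCoannihilator_span]
    ext y
    simp only [Set.mem_ofPred_eq, SetLike.mem_coe, Submodule.mem_span_singleton]
    constructor
    · exact fun h => ⟨_, (line y fun a ha h0 => h a ⟨ha, h0⟩).symm⟩
    · rintro ⟨c, rfl⟩ a ha
      simp [ha.2]
  have hne : x' ≠ 0 := by
    rintro rfl
    simp at hφ'
  have hrank : finrank ℚ (Submodule.span ℚ s) = N := by
    have := Subspace.finrank_add_finrank_dualCoannihilator_eq (Submodule.span ℚ s)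
    rw [hco, finrank_span_singleton hne, hN] at this
    omega
  obtain ⟨f, hf, hspan, -⟩ := Submodule.exists_fun_fin_finrank_span_eq ℚ s
  refine ⟨x', hx', hφ', f ∘ Fin.cast hrank.symm, fun i => hf _, fun y hy => ?_⟩
  have hy' : y ∈ (Submodule.span ℚ s).dualCoannihilator := by
    rw [← hspan, ← SetLike.mem_coe, Submodule.coe_dualCoannihilator_span]
    rintro _ ⟨i, rfl⟩
    exact hy (Fin.cast hrank i)
  rw [hco, Submodule.mem_span_singleton] at hy'
  obtain ⟨c, hc⟩ := hy'
  exact ⟨c, hc.symm⟩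

/-! ### The weight space and its pairing with integer vectors -/

/-- The weight space: pairs of rational vectors, each with coordinate sum zero. -/
def weightSpace (m n : ℕ) : Submodule ℚ ((Fin (m + 1) → ℚ) × (Fin (n + 1) → ℚ)) where
  carrier := {x | (∑ i, x.1 i) = 0 ∧ (∑ j, x.2 j) = 0}
  zero_mem' := by simp
  add_mem' := by
    rintro x y ⟨h1, h2⟩ ⟨h3, h4⟩
    simp [Finset.sum_add_distrib, h1, h2, h3, h4]
  smul_mem' := by
    rintro c x ⟨h1, h2⟩
    simp [← Finset.mul_sum, h1, h2]

lemma finrank_weightSpace (m n : ℕ) : Module.finrank ℚ (weightSpace m n) = m + n := by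
  let g : ((Fin (m + 1) → ℚ) × (Fin (n + 1) → ℚ)) →ₗ[ℚ] ℚ × ℚ :=
    { toFun := fun x => (∑ i, x.1 i, ∑ j, x.2 j)
      map_add' := by intro x y; simp [Finset.sum_add_distrib]
      map_smul' := by intro c x; simp [← Finset.mul_sum] }
  have hker : LinearMap.ker g = weightSpace m n := by
    ext x
    simp [g, weightSpace]
  have hrange : LinearMap.range g = ⊤ := by
    rw [LinearMap.range_eq_top]
    rintro ⟨a, b⟩
    exact ⟨(Pi.single 0 a, Pi.single 0 b), by simp [g]⟩
  have := LinearMap.finrank_range_add_finrank_ker g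
  rw [hker, hrange, finrank_top] at this
  simp at this
  omega

/-- The functional `⟨e, ·⟩` on the weight space given by an integer vector `e`. -/
def pairing {m n : ℕ} (e : (Fin (m + 1) → ℤ) × (Fin (n + 1) → ℤ)) :
    Module.Dual ℚ (weightSpace m n) where
  toFun x := (∑ i, (e.1 i : ℚ) * x.1.1 i) + ∑ j, (e.2 j : ℚ) * x.1.2 j
  map_add' x y := by
    simp only [Submodule.coe_add, Prod.fst_add, Prod.snd_add, Pi.add_apply, mul_add,
      Finset.sum_add_distrib]
    ring
  map_smul' c x := by
    simp only [Submodule.coe_smul, Prod.smul_fst, Prod.smul_snd, Pi.smul_apply, smul_eq_mul,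
      RingHom.id_apply, mul_add, Finset.mul_sum, mul_left_comm]

lemma pairing_apply {m n : ℕ} (e : (Fin (m + 1) → ℤ) × (Fin (n + 1) → ℤ))
    (x : weightSpace m n) :
    pairing e x = (∑ i, (e.1 i : ℚ) * x.1.1 i) + ∑ j, (e.2 j : ℚ) * x.1.2 j := rfl

/-! ### Finiteness of `EqSet` and its elements -/

lemma finite_EqSet (m n k l : ℕ) : (EqSet m n k l).Finite := by
  classical
  exact (Set.finite_Icc ((fun _ => -(k : ℤ), fun _ => -(l : ℤ)) :
      (Fin (m + 1) → ℤ) × (Fin (n + 1) → ℤ)) (fun _ => (k : ℤ), fun _ => (l : ℤ))).subset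
    fun _ he => ⟨⟨fun i => (he.1 i).1, fun j => (he.2.2.1 j).1⟩,
      ⟨fun i => (he.1 i).2, fun j => (he.2.2.1 j).2⟩⟩

/-- A difference of two unit vectors has entries of absolute value at most `1`. -/
lemma single_sub_single_bound {p c : ℕ} (hc : 1 ≤ c) (i j a : Fin p) :
    -(c : ℤ) ≤ (Pi.single i 1 - Pi.single j 1 : Fin p → ℤ) a ∧
      (Pi.single i 1 - Pi.single j 1 : Fin p → ℤ) a ≤ c := by
  simp only [Pi.sub_apply, Pi.single_apply]
  split_ifs <;> constructor <;> omega

lemma wall_fst_mem {m n k l : ℕ} (hk : 1 ≤ k) (i j : Fin (m + 1)) :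
    ((Pi.single i 1 - Pi.single j 1, 0) : (Fin (m + 1) → ℤ) × (Fin (n + 1) → ℤ))
      ∈ EqSet m n k l :=
  ⟨single_sub_single_bound hk i j, by simp, by simp, by simp⟩

lemma wall_snd_mem {m n k l : ℕ} (hl : 1 ≤ l) (i j : Fin (n + 1)) :
    ((0, Pi.single i 1 - Pi.single j 1) : (Fin (m + 1) → ℤ) × (Fin (n + 1) → ℤ))
      ∈ EqSet m n k l :=
  ⟨by simp, by simp, single_sub_single_bound hl i j, by simp⟩

lemma pairing_wall_fst {m n : ℕ} (i j : Fin (m + 1)) (x : weightSpace m n) :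
    pairing (Pi.single i 1 - Pi.single j 1, 0) x = x.1.1 i - x.1.1 j := by
  simp [pairing_apply, sub_mul, Finset.sum_sub_distrib, Pi.single_apply]

lemma pairing_wall_snd {m n : ℕ} (i j : Fin (n + 1)) (x : weightSpace m n) :
    pairing (0, Pi.single i 1 - Pi.single j 1) x = x.1.2 i - x.1.2 j := by
  simp [pairing_apply, sub_mul, Finset.sum_sub_distrib, Pi.single_apply]

/-- An entry of a vector of natural numbers with sum `c` lies in `[0, c]`, so the entries of a
difference of two such vectors lie in `[-c, c]`. -/
lemma sub_bound {p c : ℕ} {u v : Fin p → ℕ} (hu : ∑ i, u i = c) (hv : ∑ i, v i = c) (i : Fin p) :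
    -(c : ℤ) ≤ (u i : ℤ) - v i ∧ (u i : ℤ) - v i ≤ c := by
  have h1 := Finset.single_le_sum (f := u) (fun _ _ => Nat.zero_le _) (Finset.mem_univ i)
  have h2 := Finset.single_le_sum (f := v) (fun _ _ => Nat.zero_le _) (Finset.mem_univ i)
  omega

/-! ### The Weyl chamber and normalisation of rays -/

lemma eq_zero_of_const {p : ℕ} {u : Fin (p + 1) → ℚ} (h : ∀ i, u i = u 0) (hs : ∑ i, u i = 0) :
    u = 0 := by
  rw [Finset.sum_congr rfl fun i _ => h i] at hs
  simp only [Finset.sum_const, Finset.card_univ, Fintype.card_fin, nsmul_eq_mul,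
    mul_eq_zero] at hs
  have h0 : u 0 = 0 := hs.resolve_left (by positivity)
  funext i
  rw [h i, h0]
  rfl

/-- A non-increasing vector with sum zero has leading entry positive, unless it vanishes. -/
lemma head_pos_or_eq_zero {p : ℕ} {u : Fin (p + 1) → ℚ} (h : ∀ i j, i ≤ j → u j ≤ u i)
    (hs : ∑ i, u i = 0) : 0 < u 0 ∨ u = 0 := by
  rcases lt_or_ge 0 (u 0) with h0 | h0
  · exact Or.inl h0
  · right
    have hle : ∀ i ∈ Finset.univ, u i ≤ 0 := fun i _ => (h 0 i (Fin.zero_le i)).trans h0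
    funext i
    exact (Finset.sum_eq_zero_iff_of_nonpos hle).1 hs i (Finset.mem_univ i)

/-- A vector `x` of the chamber spanning the common kernel of `m + n - 1` functionals from
`EqSet m n k l` becomes a fundamental solution after scaling by the inverse of its first non-zero
leading entry. -/
lemma fundamental_of_ray {m n k l : ℕ} (x : weightSpace m n) (hx : x ≠ 0)
    (h1 : ∀ i j, i ≤ j → x.1.1 j ≤ x.1.1 i) (h2 : ∀ i j, i ≤ j → x.1.2 j ≤ x.1.2 i)
    (e : Fin (m + n - 1) → (Fin (m + 1) → ℤ) × (Fin (n + 1) → ℤ))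
    (he : ∀ t, e t ∈ EqSet m n k l) (hex : ∀ t, pairing (e t) x = 0)
    (hline : ∀ y : weightSpace m n, (∀ t, pairing (e t) y = 0) → ∃ c : ℚ, y = c • x) :
    ∃ d : ℚ, 0 < d ∧ IsFundamentalSolution m n k l (d • x.1.1) (d • x.1.2) := by
  obtain ⟨first, hq⟩ : ∃ first : Bool, 0 < (if first then x.1.1 0 else x.1.2 0) := by
    rcases head_pos_or_eq_zero h1 x.2.1 with h | h
    · exact ⟨true, by simpa using h⟩
    · rcases head_pos_or_eq_zero h2 x.2.2 with h' | h'
      · exact ⟨false, by simpa using h'⟩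
      · exact absurd (Subtype.ext (Prod.ext h h')) hx
  set q : ℚ := if first then x.1.1 0 else x.1.2 0 with hq_def
  have hd : 0 < q⁻¹ := inv_pos.2 hq
  refine ⟨q⁻¹, hd, fun i j hij => ?_, fun i j hij => ?_, ?_, ?_, ?_, e, first, he, fun y => ?_⟩
  · exact mul_le_mul_of_nonneg_left (h1 i j hij) hd.le
  · exact mul_le_mul_of_nonneg_left (h2 i j hij) hd.le
  · exact (q⁻¹ • x).2.1
  · exact (q⁻¹ • x).2.2
  · cases first
    · exact Or.inr (by simpa [hq_def] using inv_mul_cancel₀ hq.ne')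
    · exact Or.inl (by simpa [hq_def] using inv_mul_cancel₀ hq.ne')
  constructor
  · rintro ⟨hy, hy1, hy2, hn⟩
    obtain ⟨c, hc⟩ := hline ⟨y, hy1, hy2⟩ hy
    have hc' : y = c • x.1 := congrArg Subtype.val hc
    have hcq : c * q = 1 := by
      cases first <;> simpa [hc', hq_def] using hn
    rw [hc', eq_inv_of_mul_eq_one_left hcq]
    rfl
  · rintro rfl
    refine ⟨fun t => ?_, (q⁻¹ • x).2.1, (q⁻¹ • x).2.2, ?_⟩
    · have : pairing (e t) (q⁻¹ • x) = 0 := by rw [map_smul, hex, smul_zero]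
      exact this
    · cases first <;> simpa [hq_def] using inv_mul_cancel₀ hq.ne'

/-! ### Destabilising weights and fundamental solutions -/

/-- Theorems 3.2 and 3.5 (torus form), unstable case: a set of monomials `S` is
destabilised by some normalised weight vector iff it is destabilised by a
fundamental solution. -/
theorem fundamental_set_suffices_unstable
    (m n k l : ℕ) (hm : 1 ≤ m) (hn : 1 ≤ n) (hk : 1 ≤ k) (hl : 1 ≤ l)
    (S : Set ((Fin (m + 1) → ℕ) × (Fin (n + 1) → ℕ)))
    (hSne : S.Nonempty)
    (hS : ∀ I ∈ S, (∑ i, I.1 i) = k ∧ (∑ j, I.2 j) = l) :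
    (∃ (r : Fin (m + 1) → ℚ) (s : Fin (n + 1) → ℚ),
        (r, s) ≠ (0, 0) ∧
        (∀ i j : Fin (m + 1), i ≤ j → r j ≤ r i) ∧
        (∀ i j : Fin (n + 1), i ≤ j → s j ≤ s i) ∧
        (∑ i, r i) = 0 ∧ (∑ j, s j) = 0 ∧
        ∀ I ∈ S, 0 < (∑ i, r i * (I.1 i : ℚ)) + ∑ j, s j * (I.2 j : ℚ)) ↔
    (∃ (ρ : Fin (m + 1) → ℚ) (σ : Fin (n + 1) → ℚ),
        IsFundamentalSolution m n k l ρ σ ∧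
        ∀ I ∈ S, 0 < (∑ i, ρ i * (I.1 i : ℚ)) + ∑ j, σ j * (I.2 j : ℚ)) := by
  constructor
  swap
  · rintro ⟨ρ, σ, ⟨h1, h2, h3, h4, h5, -⟩, hpos⟩
    refine ⟨ρ, σ, fun h => ?_, h1, h2, h3, h4, hpos⟩
    obtain ⟨rfl, rfl⟩ := Prod.mk.inj h
    simp at h5
  rintro ⟨r, s, -, hr, hs, hr0, hs0, hpos⟩
  classical
  let toInt : (Fin (m + 1) → ℕ) × (Fin (n + 1) → ℕ) → (Fin (m + 1) → ℤ) × (Fin (n + 1) → ℤ) :=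
    fun I => (fun i => (I.1 i : ℤ), fun j => (I.2 j : ℤ))
  have hpair : ∀ I x, pairing (toInt I) x =
      (∑ i, x.1.1 i * (I.1 i : ℚ)) + ∑ j, x.1.2 j * (I.2 j : ℚ) := by
    intro I x
    simp [pairing_apply, toInt, mul_comm]
  have hsub : ∀ I J x, pairing (toInt I - toInt J) x =
      pairing (toInt I) x - pairing (toInt J) x := by
    intro I J x
    simp only [pairing_apply, Prod.fst_sub, Prod.snd_sub, Pi.sub_apply, Int.cast_sub, sub_mul,
      Finset.sum_sub_distrib]
    ring
  have hmem : ∀ I ∈ S, ∀ J ∈ S, toInt I - toInt J ∈ EqSet m n k l := by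
    intro I hI J hJ
    obtain ⟨hI1, hI2⟩ := hS I hI
    obtain ⟨hJ1, hJ2⟩ := hS J hJ
    refine ⟨fun i => sub_bound hI1 hJ1 i, ?_, fun j => sub_bound hI2 hJ2 j, ?_⟩
    · simp only [toInt, Prod.fst_sub, Pi.sub_apply, Finset.sum_sub_distrib]
      rw [← Nat.cast_sum, ← Nat.cast_sum, hI1, hJ1, sub_self]
    · simp only [toInt, Prod.snd_sub, Pi.sub_apply, Finset.sum_sub_distrib]
      rw [← Nat.cast_sum, ← Nat.cast_sum, hI2, hJ2, sub_self]
  let L : weightSpace m n := ⟨(r, s), hr0, hs0⟩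
  have hSfin : S.Finite :=
    (Set.finite_Icc 0 ((fun _ => k, fun _ => l) :
      (Fin (m + 1) → ℕ) × (Fin (n + 1) → ℕ))).subset fun I hI =>
      ⟨zero_le, fun i => (Finset.single_le_sum (fun _ _ => Nat.zero_le _)
        (Finset.mem_univ i)).trans_eq (hS I hI).1,
        fun j => (Finset.single_le_sum (fun _ _ => Nat.zero_le _)
        (Finset.mem_univ j)).trans_eq (hS I hI).2⟩
  obtain ⟨I₀, hI₀, hmin⟩ := Set.exists_min_image S (fun I => pairing (toInt I) L) hSfin hSne
  -- All the inequalities `0 ≤ ⟨e, ·⟩`, `e ∈ EqSet m n k l`, that hold at `λ = (r, s)`.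
  let A : Finset (Module.Dual ℚ (weightSpace m n)) :=
    ((finite_EqSet m n k l).toFinset.image pairing).filter fun a => 0 ≤ a L
  have hA : ∀ e ∈ EqSet m n k l, 0 ≤ pairing e L → pairing e ∈ A := by
    intro e he h
    simp only [A, Finset.mem_filter, Finset.mem_image, Set.Finite.mem_toFinset]
    exact ⟨⟨e, he, rfl⟩, h⟩
  have hwall1 : ∀ i j : Fin (m + 1), i ≤ j →
      pairing (Pi.single i 1 - Pi.single j 1, 0) ∈ A := fun i j hij =>
    hA _ (wall_fst_mem hk i j) (by rw [pairing_wall_fst]; exact sub_nonneg.2 (hr i j hij))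
  have hwall2 : ∀ i j : Fin (n + 1), i ≤ j →
      pairing (0, Pi.single i 1 - Pi.single j 1) ∈ A := fun i j hij =>
    hA _ (wall_snd_mem hl i j) (by rw [pairing_wall_snd]; exact sub_nonneg.2 (hs i j hij))
  have hpointed : ∀ y : weightSpace m n, (∀ a ∈ A, a y = 0) → y = 0 := by
    intro y hy
    refine Subtype.ext (Prod.ext (eq_zero_of_const (fun i => ?_) y.2.1)
      (eq_zero_of_const (fun j => ?_) y.2.2))
    · have := hy _ (hwall1 0 i (Fin.zero_le i))
      rw [pairing_wall_fst] at this
      linarith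
    · have := hy _ (hwall2 0 j (Fin.zero_le j))
      rw [pairing_wall_snd] at this
      linarith
  obtain ⟨x, hxA, hx0, f, hf, hline⟩ := exists_ray A hpointed (pairing (toInt I₀)) L
    (fun a ha => (Finset.mem_filter.1 ha).2) (by rw [hpair]; exact hpos I₀ hI₀) (m + n - 1)
    (by rw [finrank_weightSpace]; omega)
  have hlift : ∀ t, ∃ e ∈ EqSet m n k l, pairing e = f t := by
    intro t
    have := (hf t).1
    simp only [A, Finset.mem_filter, Finset.mem_image, Set.Finite.mem_toFinset] at this
    exact this.1
  choose e he hef using hlift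
  obtain ⟨d, hd, hfund⟩ := fundamental_of_ray (k := k) (l := l) x
    (by rintro rfl; simp at hx0)
    (fun i j hij => by
      have := hxA _ (hwall1 i j hij)
      rw [pairing_wall_fst] at this
      linarith)
    (fun i j hij => by
      have := hxA _ (hwall2 i j hij)
      rw [pairing_wall_snd] at this
      linarith)
    e he (fun t => by rw [hef]; exact (hf t).2)
    (fun y hy => hline y fun t => by rw [← hef]; exact hy t)
  refine ⟨_, _, hfund, fun I hI => ?_⟩
  have h1 : 0 ≤ pairing (toInt I - toInt I₀) x :=
    hxA _ (hA _ (hmem I hI I₀ hI₀) (by rw [hsub]; exact sub_nonneg.2 (hmin I hI)))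
  rw [hsub] at h1
  have h2 : 0 < pairing (toInt I) (d • x) := by
    rw [map_smul]
    exact mul_pos hd (by linarith)
  rw [hpair] at h2
  exact h2
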